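/- Let n ≥ 1 and let u : ℝⁿ → ℝ be a smooth (C^∞) function. Define the operator A by (Au)(x) = ⟨x, ∇u(x)⟩ + (n/2)·u(x), where ∇u is the gradient of u. Then for every positive integer k and every x ∈ ℝⁿ, the commutator identity [Δ^k, A] = 2k·Δ^k holds pointwise: Δ^k(Au)(x) − A(Δ^k u)(x) = 2k·(Δ^k u)(x), where Δ^k denotes the k-fold iterate of the Laplacian. -/

import Mathlib

open scoped RealInnerProductSpace

/-- The Laplacian, as an operator on real-valued functions on `EuclideanSpace ℝ (Fin n)`:
the trace of the second Fréchet derivative. -/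
noncomputable def lapR (n : ℕ) (f : EuclideanSpace ℝ (Fin n) → ℝ) :
    EuclideanSpace ℝ (Fin n) → ℝ := fun x =>
  ∑ i : Fin n, fderiv ℝ (fderiv ℝ f) x (EuclideanSpace.single i 1) (EuclideanSpace.single i 1)

/-- Directional derivative. -/
noncomputable def dirD {n : ℕ} (e : EuclideanSpace ℝ (Fin n)) (f : EuclideanSpace ℝ (Fin n) → ℝ) :
    EuclideanSpace ℝ (Fin n) → ℝ := fun x => fderiv ℝ f x e

/-- `x·∇ + c`. -/
noncomputable def dilA {n : ℕ} (c : ℝ) (f : EuclideanSpace ℝ (Fin n) → ℝ) :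
    EuclideanSpace ℝ (Fin n) → ℝ := fun x => fderiv ℝ f x x + c * f x

lemma contDiff_fderiv_top {n : ℕ} {f : EuclideanSpace ℝ (Fin n) → ℝ}
    (hf : ContDiff ℝ (⊤ : ℕ∞) f) : ContDiff ℝ (⊤ : ℕ∞) (fderiv ℝ f) :=
  hf.fderiv_right (by simp)

lemma contDiff_dirD {n : ℕ} (e : EuclideanSpace ℝ (Fin n)) {f : EuclideanSpace ℝ (Fin n) → ℝ}
    (hf : ContDiff ℝ (⊤ : ℕ∞) f) : ContDiff ℝ (⊤ : ℕ∞) (dirD e f) :=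
  (contDiff_fderiv_top hf).clm_apply contDiff_const

lemma fderiv_dirD {n : ℕ} (e : EuclideanSpace ℝ (Fin n)) {f : EuclideanSpace ℝ (Fin n) → ℝ}
    (hf : ContDiff ℝ (⊤ : ℕ∞) f) (x y : EuclideanSpace ℝ (Fin n)) :
    fderiv ℝ (dirD e f) x y = fderiv ℝ (fderiv ℝ f) x y e := by
  have h : DifferentiableAt ℝ (fderiv ℝ f) x :=
    (contDiff_fderiv_top hf).differentiable (by simp) x
  have := (h.hasFDerivAt.clm_apply (hasFDerivAt_const e x)).fderiv
  unfold dirD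
  rw [this]
  simp

lemma lapR_eq {n : ℕ} {f : EuclideanSpace ℝ (Fin n) → ℝ} (hf : ContDiff ℝ (⊤ : ℕ∞) f) :
    lapR n f = fun x => ∑ i : Fin n,
      dirD (EuclideanSpace.single i 1) (dirD (EuclideanSpace.single i 1) f) x := by
  funext x
  unfold lapR
  refine Finset.sum_congr rfl fun i _ => ?_
  exact (fderiv_dirD _ hf x _).symm

lemma contDiff_lapR {n : ℕ} {f : EuclideanSpace ℝ (Fin n) → ℝ} (hf : ContDiff ℝ (⊤ : ℕ∞) f) :
    ContDiff ℝ (⊤ : ℕ∞) (lapR n f) := by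
  rw [lapR_eq hf]
  exact ContDiff.sum fun i _ => contDiff_dirD _ (contDiff_dirD _ hf)

lemma contDiff_dilA {n : ℕ} (c : ℝ) {f : EuclideanSpace ℝ (Fin n) → ℝ}
    (hf : ContDiff ℝ (⊤ : ℕ∞) f) : ContDiff ℝ (⊤ : ℕ∞) (dilA c f) :=
  ((contDiff_fderiv_top hf).clm_apply contDiff_id).add (contDiff_const.mul hf)

lemma dirD_dilA {n : ℕ} (c : ℝ) (e : EuclideanSpace ℝ (Fin n))
    {f : EuclideanSpace ℝ (Fin n) → ℝ} (hf : ContDiff ℝ (⊤ : ℕ∞) f) :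
    dirD e (dilA c f) = dilA (c + 1) (dirD e f) := by
  funext x
  have h : DifferentiableAt ℝ (fderiv ℝ f) x :=
    (contDiff_fderiv_top hf).differentiable (by simp) x
  have h0 : DifferentiableAt ℝ f x := hf.differentiable (by simp) x
  have key := ((h.hasFDerivAt.clm_apply (hasFDerivAt_id x)).add
    (h0.hasFDerivAt.const_mul c)).fderiv
  have hsymm : IsSymmSndFDerivAt ℝ f x :=
    hf.contDiffAt.isSymmSndFDerivAt (by
      rw [minSmoothness_of_isRCLikeNormedField]
      exact WithTop.coe_le_coe.2 (le_top : (2 : ℕ∞) ≤ ⊤))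
  have e1 : dirD e (dilA c f) x = fderiv ℝ (fderiv ℝ f) x e x + fderiv ℝ f x e
      + c * fderiv ℝ f x e := by
    have := congrArg (fun L => L e) key
    refine Eq.trans this ?_
    simp
    ring
  rw [e1, dilA, fderiv_dirD e hf, hsymm.eq e x, dirD]
  ring

lemma lapR_dilA {n : ℕ} (c : ℝ) {f : EuclideanSpace ℝ (Fin n) → ℝ}
    (hf : ContDiff ℝ (⊤ : ℕ∞) f) : lapR n (dilA c f) = dilA (c + 2) (lapR n f) := by
  rw [lapR_eq (contDiff_dilA c hf), lapR_eq hf]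
  funext x
  have hd : ∀ i ∈ (Finset.univ : Finset (Fin n)), DifferentiableAt ℝ
      (dirD (EuclideanSpace.single i (1 : ℝ)) (dirD (EuclideanSpace.single i 1) f)) x :=
    fun i _ => (contDiff_dirD _ (contDiff_dirD _ hf)).differentiable (by simp) x
  rw [dilA, fderiv_fun_sum hd, ContinuousLinearMap.sum_apply, Finset.mul_sum,
    ← Finset.sum_add_distrib]
  refine Finset.sum_congr rfl fun i _ => ?_
  rw [dirD_dilA c _ hf, dirD_dilA _ _ (contDiff_dirD _ hf), dilA]
  ring

lemma iter_lapR_dilA {n : ℕ} (k : ℕ) : ∀ (c : ℝ) {f : EuclideanSpace ℝ (Fin n) → ℝ},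
    ContDiff ℝ (⊤ : ℕ∞) f →
    (lapR n)^[k] (dilA c f) = dilA (c + 2 * k) ((lapR n)^[k] f) := by
  induction k with
  | zero => intro c f _; simp
  | succ k ih =>
    intro c f hf
    rw [Function.iterate_succ_apply, Function.iterate_succ_apply, lapR_dilA c hf,
      ih _ (contDiff_lapR hf)]
    congr 1
    push_cast
    ring

/-- The commutator identity `[Δ^k, A] = 2k Δ^k` for the generator of dilations
`A = x·∇ + n/2`. -/
theorem stmt2 (n : ℕ) (hn : 1 ≤ n)
    (u : EuclideanSpace ℝ (Fin n) → ℝ) (hu : ContDiff ℝ (⊤ : ℕ∞) u)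
    (A : (EuclideanSpace ℝ (Fin n) → ℝ) → (EuclideanSpace ℝ (Fin n) → ℝ))
    (hA : ∀ v x, A v x = ⟪x, gradient v x⟫ + ((n : ℝ) / 2) * v x)
    (k : ℕ) (hk : 0 < k) (x : EuclideanSpace ℝ (Fin n)) :
    (lapR n)^[k] (A u) x - A ((lapR n)^[k] u) x = 2 * (k : ℝ) * (lapR n)^[k] u x := by
  have hA' : ∀ v, A v = dilA ((n : ℝ) / 2) v := by
    intro v
    funext y
    rw [hA, dilA, real_inner_comm, gradient, InnerProductSpace.toDual_symm_apply]
  rw [hA', hA', iter_lapR_dilA k _ hu, dilA, dilA]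
  ring
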